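/- arXiv:1607.07174 — 2 statements merged into one kernel-verified Lean document; each statement's English description precedes it below -/
import Mathlib

section
/- For all positive integers k and d, every finite simple graph G of tree-depth at most d satisfies f_k(G) ≤ (2k)^d. -/
/-!
Fix an elimination forest of `G` of depth at most `d`. Given an edge `xy` of an induced tree, start
at the least vertex of the tree and repeatedly delete it and keep the component of `xy`. The
successive least vertices descend to `xy`, and each of them roots a branch of its predecessor: its
subtree contains a neighbour of the predecessor. Let the anchor be the last step at which the
predecessor has at least `k` branches at the level reached. Below the anchor there are fewer than
`k` choices at every step, so labelling the two levels of the anchor, the skipped levels, and the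
branches taken determines the trail from its anchor and uses only `k + 1` labels per level.

For a fixed labelling, the parts of the trees below the various anchors together induce a forest:
those for distinct anchors lie in disjoint subtrees of the elimination forest, apart from a common
first vertex. A component that is too small is completed by joining its first vertex to all of its
at least `k` branches. If no step can serve as anchor, the least vertex of the tree does, and the
whole tree has at least `k` edges already. Hence `(k + 1) ^ d` forests suffice.
-/

open scoped Classical
open scoped Function

namespace InducedArboricity

/-- The edges of the subgraph of `G` induced by vertex set `S`, viewed as edges of `G`. -/
def forestEdges {V : Type*} (G : SimpleGraph V) (S : Set V) : Set (Sym2 V) :=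
  {e | e ∈ G.edgeSet ∧ ∀ x ∈ e, x ∈ S}

/-- The number of edges of the connected component of `v` in `H`. -/
noncomputable def compEdgeCount {W : Type*} (H : SimpleGraph W) (v : W) : ℕ :=
  {e | e ∈ H.edgeSet ∧ ∀ x ∈ e, H.Reachable v x}.ncard

/-- `S` induces a `k`-strong forest in `G`: the induced subgraph is acyclic and each of its
connected components has at least `k` edges. -/
def IsStrongForest {V : Type*} (G : SimpleGraph V) (k : ℕ) (S : Set V) : Prop :=
  (G.induce S).IsAcyclic ∧ ∀ v : S, k ≤ compEdgeCount (G.induce S) v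

/-- An edge `e` of `G` is `k`-valid if it lies in some `k`-strong forest of `G`. -/
def KValid {V : Type*} (G : SimpleGraph V) (k : ℕ) (e : Sym2 V) : Prop :=
  ∃ S : Set V, IsStrongForest G k S ∧ e ∈ forestEdges G S

/-- The `k`-strong induced arboricity: the least number of `k`-strong forests of `G`
covering all `k`-valid edges of `G`. -/
noncomputable def fStrong {V : Type*} (G : SimpleGraph V) (k : ℕ) : ℕ :=
  sInf {N | ∃ F : Fin N → Set V,
    (∀ i, IsStrongForest G k (F i)) ∧
    ∀ e : Sym2 V, KValid G k e → ∃ i, e ∈ forestEdges G (F i)}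

/-- `G` is a `d`-shallow minor of `H`. -/
def IsShallowMinor {V W : Type*} (d : ℕ) (G : SimpleGraph V) (H : SimpleGraph W) : Prop :=
  ∃ B : V → Set W,
    Pairwise (Disjoint on B) ∧
    (∀ v, ∃ c : B v, ∀ y : B v,
      (H.induce (B v)).Reachable c y ∧ (H.induce (B v)).dist c y ≤ d) ∧
    (∀ u v, G.Adj u v → ∃ x ∈ B u, ∃ y ∈ B v, H.Adj x y)

/-- A class of finite simple graphs, one set of graphs for each number of vertices. -/
def GraphClass : Type :=
  ∀ n : ℕ, Set (SimpleGraph (Fin n))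

/-- A class of graphs has bounded expansion if for every `d` there is a constant `a` such that
every `d`-shallow minor of a member of the class has at most `a` times as many edges
as vertices. -/
def BoundedExpansion (C : GraphClass) : Prop :=
  ∀ d : ℕ, ∃ a : ℕ, ∀ (m : ℕ) (G : SimpleGraph (Fin m)),
    (∃ n : ℕ, ∃ H ∈ C n, IsShallowMinor d G H) → G.edgeSet.ncard ≤ a * m

/-- A class of graphs is nowhere dense if for every `d` some graph is not a `d`-shallow minor
of any member of the class. -/
def NowhereDense (C : GraphClass) : Prop :=
  ∀ d : ℕ, ∃ (m : ℕ) (G : SimpleGraph (Fin m)), ¬ ∃ n : ℕ, ∃ H ∈ C n, IsShallowMinor d G H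

/-- The closed neighborhood of `v` in `G`. -/
def closedNbr {V : Type*} (G : SimpleGraph V) (v : V) : Set V :=
  insert v (G.neighborSet v)

/-- The sum of the labels over the closed neighborhood of `v`. -/
noncomputable def closedNbrSum {V : Type*} [Fintype V] (G : SimpleGraph V)
    (f : V → ℕ) (v : V) : ℕ :=
  ∑ x : V, if x ∈ closedNbr G v then f x else 0

/-- A labeling is distinguishing if adjacent vertices with different closed neighborhoods
receive different label sums over their closed neighborhoods. -/
def Distinguishing {V : Type*} [Fintype V] (G : SimpleGraph V) (f : V → ℕ) : Prop :=
  ∀ u v : V, G.Adj u v → closedNbr G u ≠ closedNbr G v →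
    closedNbrSum G f u ≠ closedNbrSum G f v

/-- The adjacent closed vertex-distinguishing number of `G`. -/
noncomputable def disNumber {V : Type*} [Fintype V] (G : SimpleGraph V) : ℕ :=
  sInf {L | 1 ≤ L ∧ ∃ f : V → ℕ, (∀ v, 1 ≤ f v ∧ f v ≤ L) ∧ Distinguishing G f}

/-- A proper coloring in which any two color classes together induce a forest. -/
def IsAcyclicColoring {V : Type*} (G : SimpleGraph V) {m : ℕ} (c : V → Fin m) : Prop :=
  (∀ u v : V, G.Adj u v → c u ≠ c v) ∧
  ∀ i j : Fin m, (G.induce {v | c v = i ∨ c v = j}).IsAcyclic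

/-- The acyclic chromatic number of `G`. -/
noncomputable def chiAcyc {V : Type*} (G : SimpleGraph V) : ℕ :=
  sInf {m | ∃ c : V → Fin m, IsAcyclicColoring G c}

/-- The edge arboricity of `G`: the least number of (not necessarily induced) forests
covering all edges of `G`. -/
noncomputable def arboricity {V : Type*} (G : SimpleGraph V) : ℕ :=
  sInf {N | ∃ F : Fin N → SimpleGraph V,
    (∀ i, F i ≤ G ∧ (F i).IsAcyclic) ∧
    ∀ e ∈ G.edgeSet, ∃ i, e ∈ (F i).edgeSet}

/-- `G` admits a tree decomposition of width at most `t`. -/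
def HasTreewidthAtMost {V : Type*} (G : SimpleGraph V) (t : ℕ) : Prop :=
  ∃ (ι : Type) (T : SimpleGraph ι) (B : ι → Finset V),
    T.IsTree ∧
    (∀ e ∈ G.edgeSet, ∃ i, ∀ x ∈ e, x ∈ B i) ∧
    (∀ v : V, (T.induce {i | v ∈ B i}).Connected) ∧
    (∀ i, (B i).card ≤ t + 1)

/-- The tree-width of `G`. -/
noncomputable def treewidth {V : Type*} (G : SimpleGraph V) : ℕ :=
  sInf {t | HasTreewidthAtMost G t}

/-- `G` has tree-depth at most `d`: there is a "forest order" on the vertices (the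
ancestor order of a rooted spanning forest) in which ancestor sets are chains of at most
`d` vertices and endpoints of edges of `G` are comparable.  Equivalently, every connected
component of `G` is a subgraph of the transitive closure of a rooted tree of depth `d`. -/
def HasTreedepthAtMost {V : Type*} (G : SimpleGraph V) (d : ℕ) : Prop :=
  ∃ le : V → V → Prop, IsPartialOrder V le ∧
    (∀ v : V, IsChain le {u | le u v}) ∧
    (∀ u v : V, G.Adj u v → le u v ∨ le v u) ∧
    (∀ v : V, {u | le u v}.ncard ≤ d)

/-- The tree-depth of `G`. -/
noncomputable def treedepth {V : Type*} (G : SimpleGraph V) : ℕ :=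
  sInf {d | HasTreedepthAtMost G d}

/-- `G` is a minor of `H`, witnessed by disjoint connected branch sets. -/
def IsMinorOf {V W : Type*} (G : SimpleGraph V) (H : SimpleGraph W) : Prop :=
  ∃ B : V → Set W,
    Pairwise (Disjoint on B) ∧
    (∀ v, (B v).Nonempty) ∧
    (∀ v, (H.induce (B v)).Connected) ∧
    (∀ u v, G.Adj u v → ∃ x ∈ B u, ∃ y ∈ B v, H.Adj x y)

/-- A class of graphs closed under taking minors. -/
def MinorClosed (C : GraphClass) : Prop :=
  ∀ (m n : ℕ) (G : SimpleGraph (Fin m)) (H : SimpleGraph (Fin n)),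
    H ∈ C n → IsMinorOf G H → G ∈ C m

/-- Planarity, via Wagner's characterization: no `K₅` and no `K₃,₃` minor. -/
def IsPlanar {V : Type*} (G : SimpleGraph V) : Prop :=
  ¬ IsMinorOf (SimpleGraph.completeGraph (Fin 5)) G ∧
  ¬ IsMinorOf (completeBipartiteGraph (Fin 3) (Fin 3)) G

section InducedSubgraphs

variable {V : Type*} {G : SimpleGraph V}

/-- The vertex set, in the ambient graph, of the connected component of `x` in `G.induce S`. -/
def inducedComponent (G : SimpleGraph V) {S : Set V} (x : S) : Set V :=
  (↑) '' ((G.induce S).connectedComponentMk x).supp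

lemma mem_inducedComponent {S : Set V} {x : S} {v : V} :
    v ∈ inducedComponent G x ↔ ∃ hv : v ∈ S, (G.induce S).Reachable x ⟨v, hv⟩ := by
  simp [inducedComponent, SimpleGraph.reachable_comm]

lemma self_mem_inducedComponent {S : Set V} (x : S) : (x : V) ∈ inducedComponent G x :=
  mem_inducedComponent.2 ⟨x.2, .rfl⟩

lemma inducedComponent_subset {S : Set V} (x : S) : inducedComponent G x ⊆ S := by
  rintro _ ⟨v, -, rfl⟩
  exact v.2

lemma mem_inducedComponent_of_adj {S : Set V} {x : S} {u v : V} (hu : u ∈ inducedComponent G x)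
    (hv : v ∈ S) (huv : G.Adj u v) : v ∈ inducedComponent G x := by
  obtain ⟨huS, hxu⟩ := mem_inducedComponent.1 hu
  have huv' : (G.induce S).Adj ⟨u, huS⟩ ⟨v, hv⟩ := huv
  exact mem_inducedComponent.2 ⟨hv, hxu.trans huv'.reachable⟩

lemma connected_induce_inducedComponent {S : Set V} (x : S) :
    (G.induce (inducedComponent G x)).Connected := by
  let C := (G.induce S).connectedComponentMk x
  let f : C.toSimpleGraph →g G.induce (inducedComponent G x) :=
    { toFun := fun y => ⟨y.1, Set.mem_image_of_mem _ y.2⟩, map_rel' := id }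
  refine C.connected_toSimpleGraph.map f ?_
  rintro ⟨_, y, hy, rfl⟩
  exact ⟨⟨y, hy⟩, rfl⟩

lemma subset_inducedComponent {S T : Set V} (hTS : T ⊆ S) (hT : (G.induce T).Connected) {x : S}
    (hx : (x : V) ∈ T) : T ⊆ inducedComponent G x := fun v hv =>
  mem_inducedComponent.2
    ⟨hTS hv, (hT.preconnected ⟨x, hx⟩ ⟨v, hv⟩).map (G.induceHomOfLE hTS).toHom⟩

lemma exists_adj_mem_inducedComponent_diff_singleton {U : Set V} (hU : (G.induce U).Connected)
    {q : V} (hq : q ∈ U) (x : ↑(U \ {q})) : ∃ v ∈ inducedComponent G x, G.Adj q v := by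
  by_contra! hnadj
  have stays : ∀ v, (G.induce U).Reachable ⟨x, x.2.1⟩ v → (v : V) ∈ inducedComponent G x := by
    intro v hxv
    rw [SimpleGraph.reachable_iff_reflTransGen] at hxv
    induction hxv with
    | refl => exact self_mem_inducedComponent x
    | @tail u v _ huv hu =>
      have hvq : (v : V) ≠ q := fun h => hnadj u hu (h ▸ huv.symm)
      exact mem_inducedComponent_of_adj hu ⟨v.2, hvq⟩ huv
  exact (inducedComponent_subset x (stays ⟨q, hq⟩ (hU.preconnected _ _))).2 rfl

lemma isAcyclic_induce_mono {S T : Set V} (hST : S ⊆ T) (hT : (G.induce T).IsAcyclic) :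
    (G.induce S).IsAcyclic :=
  hT.embedding (G.induceHomOfLE hST)

lemma isAcyclic_induce_pair (u v : V) : (G.induce {u, v}).IsAcyclic :=
  .of_card_le_two ((Set.encard_insert_le {v} u).trans (by norm_num [Set.encard_singleton]))

lemma connected_induce_support_diff_singleton {m : V} {c : G.Walk m m} (hc : c.IsCycle) :
    (G.induce ({v | v ∈ c.support} \ {m})).Connected := by
  cases c with
  | nil => exact absurd rfl hc.ne_nil
  | cons h p =>
    have hp : p.IsPath := ((SimpleGraph.Walk.cons_isCycle_iff p h).1 hc).1
    have hsupp : p.dropLast.support ++ [m] = p.support :=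
      p.support_dropLast_concat fun hnil => h.ne hnil.eq.symm
    have hm : m ∉ p.dropLast.support := fun hmem => by
      have hnodup := hsupp.symm ▸ hp.support_nodup
      exact List.disjoint_of_nodup_append hnodup hmem (List.mem_singleton_self m)
    have hdiff : {v | v ∈ (SimpleGraph.Walk.cons h p).support} \ {m} =
        {v | v ∈ p.dropLast.support} := by
      ext v
      simp only [SimpleGraph.Walk.support_cons, ← hsupp, Set.mem_sdiff, Set.mem_ofPred_eq,
        Set.mem_singleton_iff, List.mem_cons, List.mem_append, List.mem_nil_iff]
      grind
    rw [hdiff]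
    exact p.dropLast.connected_induce_support

lemma isAcyclic_induce_of_biconnected {F : Set V}
    (h : ∀ C ⊆ F, (G.induce C).Connected → (∀ m ∈ C, (G.induce (C \ {m})).Connected) →
      (G.induce C).IsAcyclic) : (G.induce F).IsAcyclic := by
  intro u c hc
  let c' := c.map (SimpleGraph.Embedding.induce F).toHom
  have hc' : c'.IsCycle :=
    (SimpleGraph.Walk.isCycle_map_iff_of_injective Subtype.val_injective).2 hc
  have hsub : {v | v ∈ c'.support} ⊆ F := by
    intro v hv
    obtain ⟨y, -, rfl⟩ := List.mem_map.1 (c.support_map _ ▸ Set.mem_ofPred.1 hv)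
    exact y.2
  have hdiff : ∀ m ∈ c'.support, (G.induce ({v | v ∈ c'.support} \ {m})).Connected := by
    intro m hm
    have hsupp : {v | v ∈ (c'.rotate m hm).support} = {v | v ∈ c'.support} :=
      Set.ext fun v => c'.mem_support_rotate_iff m hm
    exact hsupp ▸ connected_induce_support_diff_singleton (hc'.rotate hm)
  have hcycle : (c'.induce {v | v ∈ c'.support} fun _ hv => hv).IsCycle := by
    refine .of_map (f := (SimpleGraph.Embedding.induce {v | v ∈ c'.support}).toHom) ?_
    rwa [SimpleGraph.Walk.map_induce]
  exact h _ hsub c'.connected_induce_support hdiff _ hcycle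

end InducedSubgraphs

section ForestEdges

variable {V : Type*} {G : SimpleGraph V}

lemma mk_mem_forestEdges {S : Set V} {u v : V} :
    s(u, v) ∈ forestEdges G S ↔ G.Adj u v ∧ u ∈ S ∧ v ∈ S := by
  simp [forestEdges]

lemma forestEdges_mono {S T : Set V} (hST : S ⊆ T) : forestEdges G S ⊆ forestEdges G T :=
  fun _ he => ⟨he.1, fun x hx => hST (he.2 x hx)⟩

lemma compEdgeCount_induce {S : Set V} (x : S) :
    compEdgeCount (G.induce S) x = (forestEdges G (inducedComponent G x)).ncard := by
  unfold compEdgeCount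
  rw [← Set.ncard_image_of_injective _ (Sym2.map.injective Subtype.val_injective)]
  congr 1
  ext e
  induction e using Sym2.ind with | _ u v
  rw [mk_mem_forestEdges, mem_inducedComponent, mem_inducedComponent]
  constructor
  · rintro ⟨e, ⟨hadj, hreach⟩, he⟩
    induction e using Sym2.ind with | _ u' v'
    obtain ⟨rfl, rfl⟩ | ⟨rfl, rfl⟩ := Sym2.eq_iff.1 he
    · exact ⟨hadj, ⟨u'.2, hreach u' (by simp)⟩, ⟨v'.2, hreach v' (by simp)⟩⟩
    · exact ⟨hadj.symm, ⟨v'.2, hreach v' (by simp)⟩, ⟨u'.2, hreach u' (by simp)⟩⟩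
  · rintro ⟨hadj, ⟨hu, hxu⟩, ⟨hv, hxv⟩⟩
    refine ⟨s(⟨u, hu⟩, ⟨v, hv⟩), ⟨hadj, fun z hz => ?_⟩, rfl⟩
    obtain rfl | rfl := Sym2.mem_iff.1 hz
    · exact hxu
    · exact hxv

lemma ncard_forestEdges_le_compEdgeCount [Finite V] {S T : Set V} (hTS : T ⊆ S)
    (hT : (G.induce T).Connected) {x : S} (hx : (x : V) ∈ T) :
    (forestEdges G T).ncard ≤ compEdgeCount (G.induce S) x := by
  rw [compEdgeCount_induce]
  exact Set.ncard_le_ncard (forestEdges_mono (subset_inducedComponent hTS hT hx)) (Set.toFinite _)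

lemma fStrong_le_card {ι : Type*} (s : Finset ι) (F : ι → Set V) {k : ℕ}
    (hF : ∀ i ∈ s, IsStrongForest G k (F i))
    (hcover : ∀ e, KValid G k e → ∃ i ∈ s, e ∈ forestEdges G (F i)) : fStrong G k ≤ s.card := by
  refine Nat.sInf_le ⟨fun j => F (s.equivFin.symm j), fun j => hF _ (s.equivFin.symm j).2, ?_⟩
  intro e he
  obtain ⟨i, hi, hei⟩ := hcover e he
  exact ⟨s.equivFin ⟨i, hi⟩, by simpa using hei⟩

end ForestEdges

section Levels

variable {V : Type*} [PartialOrder V]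

/-- The depth of `v` in a forest order, counted as the number of strict ancestors of `v`, so that
roots have level `0`. -/
noncomputable def level (v : V) : ℕ := (Set.Iio v).ncard

lemma level_strictMono [Finite V] : StrictMono (level : V → ℕ) := fun _ _ huv =>
  Set.ncard_lt_ncard (Set.Iio_ssubset_Iio huv) (Set.toFinite _)

/-- The order of `V` is the ancestor order of an elimination forest of `G`: ancestor sets are
chains, and the endpoints of each edge are comparable. -/
structure IsEliminationOrder (G : SimpleGraph V) : Prop where
  isChain_Iic : ∀ v : V, IsChain (· ≤ ·) (Set.Iic v)
  le_or_le_of_adj : ∀ {u v : V}, G.Adj u v → u ≤ v ∨ v ≤ u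

variable [Finite V] {G : SimpleGraph V} (hG : IsEliminationOrder G)
include hG

lemma IsEliminationOrder.eq_of_level_eq {u v w : V} (hu : u ≤ w) (hv : v ≤ w)
    (huv : level u = level v) : u = v := by
  obtain h | h := (hG.isChain_Iic w).total hu hv
  · exact h.eq_of_not_lt fun hlt => (level_strictMono hlt).ne huv
  · exact (h.eq_of_not_lt fun hlt => (level_strictMono hlt).ne' huv).symm

lemma IsEliminationOrder.exists_isLeast {C : Set V} (hC : (G.induce C).Connected) :
    ∃ m, IsLeast C m := by
  obtain ⟨m, hm⟩ := (Set.toFinite C).exists_minimal (Set.nonempty_coe_sort.1 hC.nonempty)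
  refine ⟨m, hm.1, fun v hv => ?_⟩
  have hreach := hC.preconnected ⟨m, hm.1⟩ ⟨v, hv⟩
  rw [SimpleGraph.reachable_iff_reflTransGen] at hreach
  suffices ∀ v : C, Relation.ReflTransGen (G.induce C).Adj ⟨m, hm.1⟩ v → m ≤ v from this _ hreach
  intro v hmv
  induction hmv with
  | refl => exact le_rfl
  | @tail u v _ huv hmu =>
    obtain h | h := hG.le_or_le_of_adj huv
    · exact hmu.trans h
    · exact ((hG.isChain_Iic _).total hmu h).elim id fun hvm => hm.2 v.2 hvm

end Levels

section Pieces

variable {V : Type*} [PartialOrder V] {G : SimpleGraph V}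

/-- The children subtrees of `a` relevant at level `t`: the descendants `w` of `a` at level `t`
such that `a` has a neighbour in the subtree rooted at `w`. -/
def branches (G : SimpleGraph V) (a : V) (t : ℕ) : Set V :=
  {w | level w = t ∧ a < w ∧ ∃ v, w ≤ v ∧ G.Adj a v}

/-- `T` induces a tree in `G` which contains `a` and otherwise stays in the subtree rooted at the
descendant `σ` of `a`. The pair `(a, σ)` is the anchor of the piece; `a = σ` is allowed. -/
structure IsPiece (G : SimpleGraph V) (a σ : V) (T : Set V) : Prop where
  le : a ≤ σ
  mem : a ∈ T
  subset : T ⊆ insert a (Set.Ici σ)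
  connected : (G.induce T).Connected
  isAcyclic : (G.induce T).IsAcyclic

/-- A piece that is either large enough to be a component of a `k`-strong forest, when `a = σ`, or
can be completed to one by pieces in sibling branches, when `a < σ`. -/
structure IsStrongPiece (G : SimpleGraph V) (k : ℕ) (a σ : V) (T : Set V) : Prop
    extends IsPiece G a σ T where
  le_ncard_forestEdges : a = σ → k ≤ (forestEdges G T).ncard
  le_ncard_branches : a < σ → k ≤ (branches G a (level σ)).ncard
  exists_adj : a < σ → ∃ v ∈ T, σ ≤ v ∧ G.Adj a v

lemma IsPiece.anchor_le {a σ v : V} {T : Set V} (hT : IsPiece G a σ T) (hv : v ∈ T) : a ≤ v := by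
  obtain rfl | hσv := hT.subset hv
  exacts [le_rfl, hT.le.trans hσv]

lemma isPiece_insert {q r : V} (hqr : q < r) {C : Set V} (hC : (G.induce C).Connected)
    (hrC : r ∈ lowerBounds C) {v : V} (hv : v ∈ C) (hqv : G.Adj q v)
    (hacyc : (G.induce (insert q C)).IsAcyclic) : IsPiece G q r (insert q C) where
  le := hqr.le
  mem := Set.mem_insert q C
  subset := Set.insert_subset_insert fun _ hz => hrC hz
  connected := SimpleGraph.connected_induce_union (s := {q}) .of_subsingleton hC.preconnected
    rfl hv hqv
  isAcyclic := hacyc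

lemma isPiece_pair {a σ v : V} (haσ : a < σ) (hσv : σ ≤ v) (hav : G.Adj a v) :
    IsPiece G a σ {a, v} :=
  isPiece_insert haσ (C := {v}) .of_subsingleton (by simpa using hσv) rfl hav
    (isAcyclic_induce_pair a v)

lemma exists_isStrongPiece {k : ℕ} {a σ : V} (hσ : σ ∈ branches G a (level σ))
    (hk : k ≤ (branches G a (level σ)).ncard) : ∃ T, IsStrongPiece G k a σ T := by
  obtain ⟨-, haσ, v, hσv, hav⟩ := hσ
  exact ⟨{a, v}, isPiece_pair haσ hσv hav, fun h => absurd h haσ.ne, fun _ => hk,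
    fun _ => ⟨v, by simp, hσv, hav⟩⟩

/-- All anchors in `A` have the same pair of levels, so that pieces anchored at distinct members of
`A` can only meet in a common first vertex. -/
def IsLevelUniform (A : Set (V × V)) : Prop :=
  ∀ p ∈ A, ∀ q ∈ A, level p.1 = level q.1 ∧ level p.2 = level q.2

variable [Finite V] (hG : IsEliminationOrder G) {A : Set (V × V)} {P : V × V → Set V}
include hG

lemma IsLevelUniform.eq_of_le (hA : IsLevelUniform A) {p q : V × V} (hp : p ∈ A) (hq : q ∈ A)
    (hp_le : p.1 ≤ p.2) (hq_le : q.1 ≤ q.2) {v : V} (hpv : p.2 ≤ v) (hqv : q.2 ≤ v) : p = q :=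
  Prod.ext
    (hG.eq_of_level_eq (hp_le.trans hpv) (hq_le.trans hqv) (hA p hp q hq).1)
    (hG.eq_of_level_eq hpv hqv (hA p hp q hq).2)

-- A 2-connected set lies in one piece: remove its least vertex `m`; what remains is connected, and
-- its least vertex already determines the anchor of every piece it meets.
lemma isAcyclic_induce_biUnion (hA : IsLevelUniform A)
    (hP : ∀ p ∈ A, IsPiece G p.1 p.2 (P p)) : (G.induce (⋃ p ∈ A, P p)).IsAcyclic := by
  refine isAcyclic_induce_of_biconnected fun C hCA hC hCdiff => ?_
  obtain ⟨m, hmC, hm⟩ := hG.exists_isLeast hC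
  obtain ⟨n, ⟨hnC, hnm⟩, hn⟩ := hG.exists_isLeast (hCdiff m hmC)
  have hmn : m < n := (hm hnC).lt_of_ne' hnm
  obtain ⟨p, hp, hnp⟩ := Set.mem_iUnion₂.1 (hCA hnC)
  have hlevel : level p.1 < level n := by
    obtain ⟨q, hq, hmq⟩ := Set.mem_iUnion₂.1 (hCA hmC)
    rw [(hA p hp q hq).1]
    exact level_strictMono (((hP q hq).anchor_le hmq).trans_lt hmn)
  have hpn : p.2 ≤ n := ((hP p hp).subset hnp).resolve_left fun h => hlevel.ne (h ▸ rfl)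
  refine isAcyclic_induce_mono (fun v hv => ?_) (hP p hp).isAcyclic
  obtain ⟨q, hq, hvq⟩ := Set.mem_iUnion₂.1 (hCA hv)
  have eq_of_le {z : V} (hpz : p.2 ≤ z) (hqz : q.2 ≤ z) : q = p :=
    hA.eq_of_le hG hq hp (hP q hq).le (hP p hp).le hqz hpz
  by_cases hvm : v = m
  · obtain hvq1 | hqv := (hP q hq).subset hvq
    · have : v = p.1 := hG.eq_of_level_eq (hvm.trans_le hmn.le) ((hP p hp).le.trans hpn)
        (hvq1 ▸ (hA q hq p hp).1)
      exact this ▸ (hP p hp).mem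
    · exact eq_of_le hpn ((Set.mem_Ici.1 hqv).trans (hvm.trans_le hmn.le)) ▸ hvq
  · have hnv : n ≤ v := hn ⟨hv, hvm⟩
    have hqv : q.2 ≤ v := ((hP q hq).subset hvq).resolve_left fun h =>
      (hlevel.trans_le (level_strictMono.monotone hnv)).ne (h ▸ (hA p hp q hq).1)
    exact eq_of_le (hpn.trans hnv) hqv ▸ hvq

lemma isStrongForest_biUnion {k : ℕ} (hA : IsLevelUniform A)
    (hP : ∀ p ∈ A, IsStrongPiece G k p.1 p.2 (P p))
    (hbranches : ∀ p ∈ A, p.1 < p.2 → ∀ τ ∈ branches G p.1 (level p.2), (p.1, τ) ∈ A) :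
    IsStrongForest G k (⋃ p ∈ A, P p) := by
  refine ⟨isAcyclic_induce_biUnion hG hA fun p hp => (hP p hp).toIsPiece, fun v => ?_⟩
  obtain ⟨p, hp, hvp⟩ := Set.mem_iUnion₂.1 v.2
  have hsub {q : V × V} (hq : q ∈ A) : P q ⊆ ⋃ p ∈ A, P p := Set.subset_biUnion_of_mem hq
  obtain hpeq | hplt := (hP p hp).le.eq_or_lt
  · exact ((hP p hp).le_ncard_forestEdges hpeq).trans
      (ncard_forestEdges_le_compEdgeCount (hsub hp) (hP p hp).connected hvp)
  have hmem := hbranches p hp hplt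
  choose! nbr hnbr_mem hnbr_le hnbr_adj using fun τ (hτ : τ ∈ branches G p.1 (level p.2)) =>
    (hP _ (hmem τ hτ)).exists_adj hτ.2.1
  have hroot : p.1 ∈ inducedComponent G v :=
    subset_inducedComponent (hsub hp) (hP p hp).connected hvp (hP p hp).mem
  have hnbr_comp : ∀ τ ∈ branches G p.1 (level p.2), nbr τ ∈ inducedComponent G v := fun τ hτ =>
    mem_inducedComponent_of_adj hroot (hsub (hmem τ hτ) (hnbr_mem τ hτ)) (hnbr_adj τ hτ)
  rw [compEdgeCount_induce]
  refine ((hP p hp).le_ncard_branches hplt).trans <|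
    Set.ncard_le_ncard_of_injOn (fun τ => s(p.1, nbr τ)) (fun τ hτ => ?_) ?_ (Set.toFinite _)
  · exact mk_mem_forestEdges.2 ⟨hnbr_adj τ hτ, hroot, hnbr_comp τ hτ⟩
  · intro τ hτ τ' hτ' hedge
    have hnbr_eq : nbr τ = nbr τ' := Sym2.congr_right.1 hedge
    exact hG.eq_of_level_eq (hnbr_le τ hτ) (hnbr_eq ▸ hnbr_le τ' hτ') (hτ.1.trans hτ'.1.symm)

lemma exists_isStrongForest_of_pieces {k : ℕ} (hA : IsLevelUniform A)
    (hP : ∀ p ∈ A, IsStrongPiece G k p.1 p.2 (P p)) :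
    ∃ F, IsStrongForest G k F ∧ ∀ p ∈ A, P p ⊆ F := by
  let B : Set (V × V) := {q | ∃ p ∈ A, p.1 < p.2 ∧ q.1 = p.1 ∧ q.2 ∈ branches G p.1 (level p.2)}
  have hlevel : ∀ q ∈ A ∪ B, ∃ p ∈ A, level q.1 = level p.1 ∧ level q.2 = level p.2 := by
    rintro q (hq | ⟨p, hp, -, h1, h2⟩)
    exacts [⟨q, hq, rfl, rfl⟩, ⟨p, hp, congrArg level h1, h2.1⟩]
  have hAB : IsLevelUniform (A ∪ B) := by
    intro q hq q' hq'
    obtain ⟨p, hp, h1, h2⟩ := hlevel q hq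
    obtain ⟨p', hp', h1', h2'⟩ := hlevel q' hq'
    rw [h1, h2, h1', h2']
    exact hA p hp p' hp'
  have hpiece : ∀ q ∈ A ∪ B, ∃ T, IsStrongPiece G k q.1 q.2 T ∧ (q ∈ A → T = P q) := by
    intro q hq
    by_cases hqA : q ∈ A
    · exact ⟨P q, hP q hqA, fun _ => rfl⟩
    obtain ⟨p, hp, hplt, hqp1, hq2⟩ := hq.resolve_left hqA
    have hbr : branches G q.1 (level q.2) = branches G p.1 (level p.2) := by rw [hqp1, hq2.1]
    obtain ⟨T, hT⟩ := exists_isStrongPiece (hbr ▸ hq2)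
      (hbr ▸ (hP p hp).le_ncard_branches hplt)
    exact ⟨T, hT, fun h => absurd h hqA⟩
  choose! Q hQ hQP using hpiece
  refine ⟨⋃ q ∈ A ∪ B, Q q, isStrongForest_biUnion hG hAB hQ ?_, fun p hp => ?_⟩
  · rintro q (hq | ⟨p, hp, hplt, hqp1, hq2⟩) hqlt τ hτ
    · exact .inr ⟨q, hq, hqlt, rfl, hτ⟩
    · rw [hqp1, hq2.1] at hτ
      exact .inr ⟨p, hp, hplt, hqp1, hτ⟩
  · rw [← hQP p (.inl hp) hp]
    exact Set.subset_biUnion_of_mem (u := Q) (Set.mem_union_left B hp)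

end Pieces

section Trails

variable {V : Type*} [PartialOrder V] {G : SimpleGraph V} {k : ℕ}

/-- `r` roots a branch of `q`, and `q` has fewer than `k` branches at the level of `r`. -/
def IsLightBranch (G : SimpleGraph V) (k : ℕ) (q r : V) : Prop :=
  r ∈ branches G q (level r) ∧ (branches G q (level r)).ncard < k

/-- The list `a :: σ :: L` leads from the anchor `(a, σ)` of a strong piece `T` to the edge `xy` in
`T`, descending through light branches from `σ` on. -/
structure IsAnchoredTrail (G : SimpleGraph V) (k : ℕ) (x y a σ : V) (L : List V) (T : Set V) :
    Prop where
  isStrongPiece : IsStrongPiece G k a σ T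
  left_mem : x ∈ T
  right_mem : y ∈ T
  isChain : List.IsChain (IsLightBranch G k) (σ :: L)
  isSuffix : [x, y] <:+ a :: σ :: L

lemma IsPiece.anchored_or_light {q r x y : V} {L : List V} {T : Set V} (hT : IsPiece G q r T)
    (hqr : q < r) (hadj : ∃ v ∈ T, r ≤ v ∧ G.Adj q v) (hx : x ∈ T) (hy : y ∈ T)
    (hL : List.IsChain (IsLightBranch G k) (r :: L)) (hsuffix : [x, y] <:+ q :: r :: L) :
    IsAnchoredTrail G k x y q r L T ∨ List.IsChain (IsLightBranch G k) (q :: r :: L) := by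
  obtain hk | hk := le_or_gt k (branches G q (level r)).ncard
  · exact .inl ⟨⟨hT, fun h => absurd h hqr.ne, fun _ => hk, fun _ => hadj⟩, hx, hy, hL, hsuffix⟩
  · obtain ⟨v, -, hrv, hqv⟩ := hadj
    exact .inr (hL.cons_cons ⟨⟨rfl, hqr, v, hrv, hqv⟩, hk⟩)

lemma exists_isAnchoredTrail_or_light [Finite V] (hG : IsEliminationOrder G) {x y : V}
    (hxy : x < y) (hadj : G.Adj x y) {U : Set V} (hU : (G.induce U).Connected)
    (hacyc : (G.induce U).IsAcyclic) {q : V} (hq : IsLeast U q) (hx : x ∈ U) (hy : y ∈ U) :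
    (∃ a σ L T, IsAnchoredTrail G k x y a σ L T) ∨
      ∃ L, List.IsChain (IsLightBranch G k) (q :: L) ∧ [x, y] <:+ q :: L := by
  induction q using WellFoundedGT.induction generalizing U with | _ q ih
  obtain rfl | hqx := (hq.2 hx).eq_or_lt
  · exact ((isPiece_pair hxy le_rfl hadj).anchored_or_light hxy ⟨y, by simp, le_rfl, hadj⟩
      (by simp) (by simp) (.singleton y) List.suffix_rfl).imp
        (fun h => ⟨_, _, _, _, h⟩) fun h => ⟨_, h, List.suffix_rfl⟩
  set C := inducedComponent G (⟨x, hx, hqx.ne'⟩ : ↑(U \ {q}))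
  have hC : (G.induce C).Connected := connected_induce_inducedComponent _
  have hCU : C ⊆ U \ {q} := inducedComponent_subset _
  have hxC : x ∈ C := self_mem_inducedComponent _
  have hyC : y ∈ C := mem_inducedComponent_of_adj hxC ⟨hy, (hqx.trans hxy).ne'⟩ hadj
  obtain ⟨r, hr⟩ := hG.exists_isLeast hC
  have hqr : q < r := (hq.2 (hCU hr.1).1).lt_of_ne' (hCU hr.1).2
  obtain ⟨v, hvC, hqv⟩ := exists_adj_mem_inducedComponent_diff_singleton hU hq.1 ⟨x, hx, hqx.ne'⟩
  have hCacyc : (G.induce C).IsAcyclic :=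
    isAcyclic_induce_mono (hCU.trans Set.sdiff_subset) hacyc
  have hpiece : IsPiece G q r (insert q C) := isPiece_insert hqr hC hr.2 hvC hqv <|
    isAcyclic_induce_mono (Set.insert_subset hq.1 (hCU.trans Set.sdiff_subset)) hacyc
  obtain htrail | ⟨L, hL, hsuffix⟩ := ih r hqr hC hCacyc hr hxC hyC
  · exact .inl htrail
  have hsuffix' : [x, y] <:+ q :: r :: L := hsuffix.trans (List.suffix_cons _ _)
  exact (hpiece.anchored_or_light hqr ⟨v, .inr hvC, hr.2 hvC, hqv⟩ (.inr hxC) (.inr hyC) hL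
    hsuffix').imp (fun h => ⟨_, _, _, _, h⟩) fun h => ⟨_, h, hsuffix'⟩

lemma exists_isAnchoredTrail [Finite V] (hG : IsEliminationOrder G) {x y : V} (hxy : x < y)
    (hvalid : KValid G k s(x, y)) : ∃ a σ L T, IsAnchoredTrail G k x y a σ L T := by
  obtain ⟨S, hS, hedge⟩ := hvalid
  obtain ⟨hadj, hx, hy⟩ := mk_mem_forestEdges.1 hedge
  let x' : S := ⟨x, hx⟩
  have hU : (G.induce (inducedComponent G x')).Connected := connected_induce_inducedComponent x'
  have hacyc : (G.induce (inducedComponent G x')).IsAcyclic :=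
    isAcyclic_induce_mono (inducedComponent_subset x') hS.1
  have hxU : x ∈ inducedComponent G x' := self_mem_inducedComponent x'
  have hyU : y ∈ inducedComponent G x' := mem_inducedComponent_of_adj hxU hy hadj
  obtain ⟨z, hz⟩ := hG.exists_isLeast hU
  obtain htrail | ⟨L, hL, hsuffix⟩ :=
    exists_isAnchoredTrail_or_light hG hxy hadj hU hacyc hz hxU hyU
  · exact htrail
  refine ⟨z, z, L, inducedComponent G x', ⟨?_, ?_, ?_, ?_⟩, hxU, hyU, hL,
    hsuffix.trans (List.suffix_cons _ _)⟩
  · exact ⟨le_rfl, hz.1, fun v hv => .inr (hz.2 hv), hU, hacyc⟩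
  · exact fun _ => compEdgeCount_induce x' ▸ hS.2 x'
  · exact fun h => absurd h (lt_irrefl z)
  · exact fun h => absurd h (lt_irrefl z)

end Trails

section Codes

variable {V : Type*} [Finite V]

/-- An arbitrary numbering of the elements of `s` by `0, …, |s| - 1`, with junk value `0` outside
of `s`. -/
noncomputable def indexIn (s : Set V) (v : V) : ℕ :=
  if hv : v ∈ s then Finite.equivFin s ⟨v, hv⟩ else 0

lemma indexIn_lt {s : Set V} {v : V} (hv : v ∈ s) : indexIn s v < s.ncard := by
  rw [indexIn, dif_pos hv, ← Nat.card_coe_set_eq]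
  exact Fin.is_lt _

lemma injOn_indexIn (s : Set V) : Set.InjOn (indexIn s) s := by
  intro u hu v hv huv
  simp only [indexIn, hu, hv, dif_pos, Fin.val_inj] at huv
  exact congrArg Subtype.val ((Finite.equivFin s).injective huv)

variable [PartialOrder V] {G : SimpleGraph V} {k : ℕ}

/-- The code of a descending list `q :: L`: a function of the level which records, at the level of
each `r` in `L`, which branch of the preceding vertex is rooted at `r`. Levels skipped by `L` have
code `0`; branch indices are shifted by `2` to keep the value `1` free for anchors. -/
noncomputable def trailCode (G : SimpleGraph V) : V → List V → ℕ → ℕ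
  | _, [] => 0
  | q, r :: L =>
    Function.update (trailCode G r L) (level r) (indexIn (branches G q (level r)) r + 2)

lemma exists_level_eq_of_trailCode_ne_zero {q : V} {L : List V} {t : ℕ}
    (ht : trailCode G q L t ≠ 0) : ∃ r ∈ L, level r = t := by
  induction L generalizing q with
  | nil => exact absurd rfl ht
  | cons r L ih =>
    by_cases hrt : level r = t
    · exact ⟨r, by simp, hrt⟩
    · rw [trailCode, Function.update_of_ne (Ne.symm hrt)] at ht
      obtain ⟨s, hs, hst⟩ := ih ht
      exact ⟨s, List.mem_cons_of_mem r hs, hst⟩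

lemma trailCode_ne_one (q : V) (L : List V) (t : ℕ) : trailCode G q L t ≠ 1 := by
  induction L generalizing q with
  | nil => exact zero_ne_one
  | cons r L ih =>
    rw [trailCode, Function.update_apply]
    split_ifs
    exacts [by simp, ih r]

lemma trailCode_le {q : V} {L : List V} (hL : List.IsChain (IsLightBranch G k) (q :: L)) (t : ℕ) :
    trailCode G q L t ≤ k := by
  induction L generalizing q with
  | nil => exact Nat.zero_le k
  | cons r L ih =>
    obtain ⟨⟨hr, hlight⟩, hL⟩ := List.isChain_cons_cons.1 hL
    rw [trailCode, Function.update_apply]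
    split_ifs
    · have := indexIn_lt hr
      omega
    · exact ih hL

lemma level_lt_of_trailCode_ne_zero {q : V} {L : List V}
    (hL : List.IsChain (IsLightBranch G k) (q :: L)) {t : ℕ} (ht : trailCode G q L t ≠ 0) :
    level q < t := by
  obtain ⟨r, hr, rfl⟩ := exists_level_eq_of_trailCode_ne_zero ht
  have hlt : List.IsChain (· < ·) (q :: L) := hL.imp fun _ _ h => h.1.2.1
  exact level_strictMono (List.rel_of_pairwise_cons hlt.pairwise hr)

lemma trailCode_eq_zero {q : V} {L : List V} (hL : List.IsChain (IsLightBranch G k) (q :: L))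
    {t : ℕ} (ht : t ≤ level q) : trailCode G q L t = 0 :=
  not_imp_comm.1 (level_lt_of_trailCode_ne_zero hL) ht.not_gt

lemma level_le_of_trailCode_cons_ne_zero {q r : V} {L : List V}
    (hL : List.IsChain (IsLightBranch G k) (r :: L)) {t : ℕ} (ht : trailCode G q (r :: L) t ≠ 0) :
    level r ≤ t := by
  by_contra! hlt
  rw [trailCode, Function.update_of_ne hlt.ne] at ht
  exact hlt.not_gt (level_lt_of_trailCode_ne_zero hL ht)

lemma trailCode_cons_level_ne_zero (q r : V) (L : List V) :
    trailCode G q (r :: L) (level r) ≠ 0 := by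
  simp [trailCode]

lemma eq_of_trailCode_eq {q : V} {L L' : List V}
    (hL : List.IsChain (IsLightBranch G k) (q :: L))
    (hL' : List.IsChain (IsLightBranch G k) (q :: L')) (h : trailCode G q L = trailCode G q L') :
    L = L' := by
  induction L generalizing q L' with
  | nil =>
    cases L' with
    | nil => rfl
    | cons r' L' => exact absurd (congrFun h (level r')).symm (trailCode_cons_level_ne_zero q r' L')
  | cons r L ih =>
    cases L' with
    | nil => exact absurd (congrFun h (level r)) (trailCode_cons_level_ne_zero q r L)
    | cons r' L' =>
      obtain ⟨hqr, hL⟩ := List.isChain_cons_cons.1 hL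
      obtain ⟨hqr', hL'⟩ := List.isChain_cons_cons.1 hL'
      have hlevel : level r = level r' := le_antisymm
        (level_le_of_trailCode_cons_ne_zero hL (h ▸ trailCode_cons_level_ne_zero q r' L'))
        (level_le_of_trailCode_cons_ne_zero hL' (h ▸ trailCode_cons_level_ne_zero q r L))
      have hindex := congrFun h (level r)
      simp only [trailCode, ← hlevel, Function.update_self, Nat.add_right_cancel_iff] at hindex
      obtain rfl : r = r' := injOn_indexIn _ hqr.1 (hlevel ▸ hqr'.1) hindex
      refine congrArg (r :: ·) (ih hL hL' (funext fun t => ?_))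
      obtain rfl | ht := eq_or_ne t (level r)
      · rw [trailCode_eq_zero hL le_rfl, trailCode_eq_zero hL' le_rfl]
      · simpa only [trailCode, Function.update_of_ne ht] using congrFun h t

/-- The code of an anchored trail `a :: σ :: L`: the code of the trail `σ :: L` below the anchor,
with the two anchor levels marked by the value `1`. -/
noncomputable def anchoredCode (G : SimpleGraph V) (a σ : V) (L : List V) : ℕ → ℕ :=
  Function.update (Function.update (trailCode G σ L) (level a) 1) (level σ) 1

variable {a σ : V} {L : List V}

lemma anchoredCode_of_ne {t : ℕ} (ha : t ≠ level a) (hσ : t ≠ level σ) :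
    anchoredCode G a σ L t = trailCode G σ L t := by
  rw [anchoredCode, Function.update_of_ne hσ, Function.update_of_ne ha]

lemma anchoredCode_eq_one_iff {t : ℕ} :
    anchoredCode G a σ L t = 1 ↔ t = level a ∨ t = level σ := by
  simp only [anchoredCode, Function.update_apply]
  split_ifs <;> simp_all [trailCode_ne_one]

lemma anchoredCode_le (hk : 1 ≤ k) (hL : List.IsChain (IsLightBranch G k) (σ :: L)) (t : ℕ) :
    anchoredCode G a σ L t ≤ k := by
  by_cases ht : t = level a ∨ t = level σ
  · exact (anchoredCode_eq_one_iff.2 ht).trans_le hk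
  · rw [not_or] at ht
    exact anchoredCode_of_ne ht.1 ht.2 ▸ trailCode_le hL t

lemma exists_level_eq_of_anchoredCode_ne_zero {t : ℕ} (ht : anchoredCode G a σ L t ≠ 0) :
    ∃ v : V, level v = t := by
  by_cases ha : t = level a
  · exact ⟨a, ha.symm⟩
  by_cases hσ : t = level σ
  · exact ⟨σ, hσ.symm⟩
  rw [anchoredCode_of_ne ha hσ] at ht
  exact (exists_level_eq_of_trailCode_ne_zero ht).imp fun _ => And.right

lemma levels_eq_of_anchoredCode_eq {a' σ' : V} {L' : List V} (haσ : a ≤ σ) (haσ' : a' ≤ σ')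
    (h : anchoredCode G a σ L = anchoredCode G a' σ' L') :
    level a = level a' ∧ level σ = level σ' := by
  have hmarks (t : ℕ) : t = level a ∨ t = level σ ↔ t = level a' ∨ t = level σ' := by
    rw [← anchoredCode_eq_one_iff, h, anchoredCode_eq_one_iff]
  have hle := level_strictMono.monotone haσ
  have hle' := level_strictMono.monotone haσ'
  have h₁ := (hmarks (level a)).1 (.inl rfl)
  have h₂ := (hmarks (level σ)).1 (.inr rfl)
  have h₃ := (hmarks (level a')).2 (.inl rfl)
  have h₄ := (hmarks (level σ')).2 (.inr rfl)
  omega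

lemma eq_of_anchoredCode_eq {L' : List V} (haσ : a ≤ σ)
    (hL : List.IsChain (IsLightBranch G k) (σ :: L))
    (hL' : List.IsChain (IsLightBranch G k) (σ :: L'))
    (h : anchoredCode G a σ L = anchoredCode G a σ L') : L = L' := by
  refine eq_of_trailCode_eq hL hL' (funext fun t => ?_)
  obtain ht | ht := le_or_gt t (level σ)
  · rw [trailCode_eq_zero hL ht, trailCode_eq_zero hL' ht]
  · have ha : t ≠ level a := ((level_strictMono.monotone haσ).trans_lt ht).ne'
    rw [← anchoredCode_of_ne ha ht.ne', h, anchoredCode_of_ne ha ht.ne']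

lemma IsAnchoredTrail.edge_eq {x y x' y' : V} {L' : List V} {T T' : Set V}
    (h : IsAnchoredTrail G k x y a σ L T) (h' : IsAnchoredTrail G k x' y' a σ L' T')
    (hcode : anchoredCode G a σ L = anchoredCode G a σ L') : x = x' ∧ y = y' := by
  obtain rfl := eq_of_anchoredCode_eq h.isStrongPiece.le h.isChain h'.isChain hcode
  have hsuffix : [x, y] <:+ [x', y'] :=
    List.suffix_of_suffix_length_le h.isSuffix h'.isSuffix le_rfl
  simpa using hsuffix.eq_of_length rfl

lemma exists_isStrongForest_of_code (hG : IsEliminationOrder G) (k : ℕ) (c : ℕ → ℕ) :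
    ∃ F, IsStrongForest G k F ∧ ∀ x y a σ L T, IsAnchoredTrail G k x y a σ L T →
      anchoredCode G a σ L = c → x ∈ F ∧ y ∈ F := by
  let A : Set (V × V) :=
    {p | ∃ x y L T, IsAnchoredTrail G k x y p.1 p.2 L T ∧ anchoredCode G p.1 p.2 L = c}
  have hA : IsLevelUniform A := by
    rintro p ⟨_, _, _, _, htrail, hcode⟩ q ⟨_, _, _, _, htrail', hcode'⟩
    exact levels_eq_of_anchoredCode_eq htrail.isStrongPiece.le htrail'.isStrongPiece.le
      (hcode.trans hcode'.symm)
  choose! x y L T htrail hcode using fun p (hp : p ∈ A) => hp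
  obtain ⟨F, hF, hTF⟩ :=
    exists_isStrongForest_of_pieces hG hA fun p hp => (htrail p hp).isStrongPiece
  refine ⟨F, hF, fun x' y' a σ L' T' htrail' hcode' => ?_⟩
  have hp : (a, σ) ∈ A := ⟨x', y', L', T', htrail', hcode'⟩
  obtain ⟨rfl, rfl⟩ := htrail'.edge_eq (htrail _ hp) (hcode'.trans (hcode _ hp).symm)
  exact ⟨hTF _ hp (htrail _ hp).left_mem, hTF _ hp (htrail _ hp).right_mem⟩

end Codes

section Treedepth

variable {V : Type*} [Finite V] {G : SimpleGraph V} {d k : ℕ}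

lemma extend_val_comp_val {c : ℕ → ℕ} (hc : ∀ t, c t ≠ 0 → t < d) :
    Function.extend (Fin.val : Fin d → ℕ) (c ∘ Fin.val) 0 = c := by
  funext t
  by_cases ht : t < d
  · exact Fin.val_injective.extend_apply (c ∘ Fin.val) 0 ⟨t, ht⟩
  · rw [Function.extend_apply' _ _ _ fun ⟨i, hi⟩ => ht (hi ▸ i.2)]
    exact (not_imp_comm.1 (hc t) ht).symm

lemma fStrong_le_of_isEliminationOrder [PartialOrder V] (hG : IsEliminationOrder G) (hk : 1 ≤ k)
    (hd : ∀ v : V, level v < d) : fStrong G k ≤ (k + 1) ^ d := by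
  choose F hF hcover using exists_isStrongForest_of_code hG k
  let codes : Finset (Fin d → ℕ) := Fintype.piFinset fun _ => Finset.range (k + 1)
  have hcard : codes.card = (k + 1) ^ d := by simp [codes]
  have hcovered {x y : V} (hxy : x < y) (hvalid : KValid G k s(x, y)) :
      ∃ f ∈ codes, x ∈ F (Function.extend Fin.val f 0) ∧ y ∈ F (Function.extend Fin.val f 0) := by
    obtain ⟨a, σ, L, T, htrail⟩ := exists_isAnchoredTrail hG hxy hvalid
    have hsupp : ∀ t, anchoredCode G a σ L t ≠ 0 → t < d := fun t ht => by
      obtain ⟨v, rfl⟩ := exists_level_eq_of_anchoredCode_ne_zero ht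
      exact hd v
    refine ⟨anchoredCode G a σ L ∘ Fin.val, ?_, ?_⟩
    · exact Fintype.mem_piFinset.2 fun t =>
        Finset.mem_range_succ_iff.2 (anchoredCode_le hk htrail.isChain t)
    · rw [extend_val_comp_val hsupp]
      exact hcover _ x y a σ L T htrail rfl
  rw [← hcard]
  refine fStrong_le_card codes (fun f => F (Function.extend Fin.val f 0)) (fun _ _ => hF _) ?_
  intro e hvalid
  induction e using Sym2.ind with | _ x y
  obtain ⟨S, -, hedge⟩ := id hvalid
  have hadj : G.Adj x y := (mk_mem_forestEdges.1 hedge).1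
  obtain hle | hle := hG.le_or_le_of_adj hadj
  · obtain ⟨f, hf, hx, hy⟩ := hcovered (hle.lt_of_ne hadj.ne) hvalid
    exact ⟨f, hf, mk_mem_forestEdges.2 ⟨hadj, hx, hy⟩⟩
  · obtain ⟨f, hf, hy, hx⟩ := hcovered (hle.lt_of_ne hadj.ne') (Sym2.eq_swap ▸ hvalid)
    exact ⟨f, hf, mk_mem_forestEdges.2 ⟨hadj, hx, hy⟩⟩

lemma fStrong_le_of_hasTreedepthAtMost (hk : 1 ≤ k) (h : HasTreedepthAtMost G d) :
    fStrong G k ≤ (k + 1) ^ d := by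
  obtain ⟨le, hle, hchain, hadj, hcard⟩ := h
  let : PartialOrder V :=
    { le := le, le_refl := hle.refl, le_trans := hle.trans, le_antisymm := hle.antisymm }
  refine fStrong_le_of_isEliminationOrder ⟨hchain, hadj _ _⟩ hk fun v => ?_
  calc level v < (Set.Iic v).ncard := Set.ncard_lt_ncard Set.Iio_ssubset_Iic_self (Set.toFinite _)
    _ ≤ d := hcard v

lemma hasTreedepthAtMost_natCard (G : SimpleGraph V) : HasTreedepthAtMost G (Nat.card V) := by
  let : LinearOrder V := LinearOrder.lift' _ (Finite.equivFin V).injective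
  exact ⟨(· ≤ ·), inferInstance, fun _ _ _ _ _ _ => le_total _ _, fun u v _ => le_total u v,
    fun _ => Set.ncard_le_card _⟩

lemma hasTreedepthAtMost_treedepth (G : SimpleGraph V) : HasTreedepthAtMost G (treedepth G) :=
  Nat.sInf_mem (s := {d | HasTreedepthAtMost G d}) ⟨_, hasTreedepthAtMost_natCard G⟩

end Treedepth

theorem fStrong_le_of_treedepth_general {V : Type*} [Finite V] (G : SimpleGraph V) {k : ℕ}
    (hk : 1 ≤ k) : fStrong G k ≤ (k + 1) ^ treedepth G :=
  fStrong_le_of_hasTreedepthAtMost hk (hasTreedepthAtMost_treedepth G)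

/-- For all positive integers `k` and `d`, every finite simple graph `G`
of tree-depth at most `d` satisfies `f_k(G) ≤ (2k)^d`. -/
theorem fStrong_le_of_treedepth {V : Type} [Fintype V] (G : SimpleGraph V) (k d : ℕ)
    (hk : 1 ≤ k) (hd : 1 ≤ d) (htd : treedepth G ≤ d) :
    fStrong G k ≤ (2 * k) ^ d := by
  calc fStrong G k ≤ (k + 1) ^ treedepth G := fStrong_le_of_treedepth_general G hk
    _ ≤ (k + 1) ^ d := Nat.pow_le_pow_right k.succ_pos htd
    _ ≤ (2 * k) ^ d := Nat.pow_le_pow_left (by omega) d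

end InducedArboricity
end

section
/- Every finite simple graph G of tree-depth at most d satisfies f_1(G) ≤ C(d, 2), where C(d,2) is the binomial coefficient (d choose 2); moreover this bound is attained by the complete graph K_d, which has tree-depth d and f_1(K_d) = C(d,2). -/
open scoped Classical
open scoped Function

namespace InducedArboricity

/-!
Write `ω`, `χ`, `td` for the clique number, the acyclic chromatic number and the tree-depth. Then
`C(ω, 2) ≤ f₁ ≤ C(χ, 2)` and `ω ≤ χ ≤ td`. In an acyclic colouring every pair of colours induces a
forest, and these forests cover all edges; deleting their isolated vertices makes them `1`-strong
without losing an edge. Conversely, an induced forest contains no triangle, hence at most one edge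
of a given clique. Finally, colouring each vertex by its depth in a forest order is acyclic: a
vertex has at most one neighbour of each smaller depth, so two colours induce a star forest.
For `K_d` all of `ω`, `χ`, `td` equal `d`.
-/

variable {V : Type*} {G : SimpleGraph V}

/-- The family `F` witnesses that the `k`-valid edges of `G` can be covered by `k`-strong forests;
`fStrong G k` is the least size of such a family. -/
def IsStrongForestCover {ι : Type*} (G : SimpleGraph V) (k : ℕ) (F : ι → Set V) : Prop :=
  (∀ i, IsStrongForest G k (F i)) ∧ ∀ e, KValid G k e → ∃ i, e ∈ forestEdges G (F i)

theorem IsStrongForestCover.fStrong_le_card {ι : Type*} [Fintype ι] {k : ℕ} {F : ι → Set V}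
    (hF : IsStrongForestCover G k F) : fStrong G k ≤ Fintype.card ι := by
  refine Nat.sInf_le ⟨F ∘ (Fintype.equivFin ι).symm, fun i ↦ hF.1 _, fun e he ↦ ?_⟩
  obtain ⟨i, hi⟩ := hF.2 e he
  exact ⟨Fintype.equivFin ι i, by simpa using hi⟩

theorem exists_isStrongForestCover_fStrong [Finite V] (G : SimpleGraph V) (k : ℕ) :
    ∃ F : Fin (fStrong G k) → Set V, IsStrongForestCover G k F := by
  choose S hS hmem using fun e : {e // KValid G k e} ↦ e.2
  let φ := Finite.equivFin {e // KValid G k e}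
  exact Nat.sInf_mem (s := {N | ∃ F : Fin N → Set V, IsStrongForestCover G k F})
    ⟨_, S ∘ φ.symm, fun i ↦ hS _, fun e he ↦ ⟨φ ⟨e, he⟩, by simpa using hmem ⟨e, he⟩⟩⟩

theorem one_le_compEdgeCount_of_adj [Finite V] {v w : V} (h : G.Adj v w) :
    1 ≤ compEdgeCount G v :=
  (Set.ncard_pos (Set.toFinite _)).2
    ⟨s(v, w), h, Sym2.forall_mem_pair.2 ⟨.refl v, h.reachable⟩⟩

/-- The vertices of `S` that are not isolated in the subgraph of `G` induced by `S`. Passing to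
them turns an arbitrary induced forest into a `1`-strong one. -/
def nonIsolated (G : SimpleGraph V) (S : Set V) : Set V :=
  {v ∈ S | ∃ w ∈ S, G.Adj v w}

theorem forestEdges_nonIsolated (G : SimpleGraph V) (S : Set V) :
    forestEdges G (nonIsolated G S) = forestEdges G S := by
  refine Set.Subset.antisymm (fun e he ↦ ⟨he.1, fun x hx ↦ (he.2 x hx).1⟩) fun e ↦ ?_
  induction e with
  | h x y =>
    rintro ⟨hxy, hS⟩
    obtain ⟨hx, hy⟩ := Sym2.forall_mem_pair.1 hS
    exact ⟨hxy, Sym2.forall_mem_pair.2 ⟨⟨hx, y, hy, hxy⟩, ⟨hy, x, hx, hxy.symm⟩⟩⟩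

theorem isStrongForest_one_nonIsolated [Finite V] {S : Set V} (hS : (G.induce S).IsAcyclic) :
    IsStrongForest G 1 (nonIsolated G S) := by
  refine ⟨hS.embedding (SimpleGraph.induceHomOfLE G fun _ hv ↦ hv.1), ?_⟩
  rintro ⟨v, hv, w, hw, hvw⟩
  have hadj : (G.induce (nonIsolated G S)).Adj ⟨v, hv, w, hw, hvw⟩ ⟨w, hw, v, hv, hvw.symm⟩ := hvw
  exact one_le_compEdgeCount_of_adj hadj

theorem kValid_one_iff [Finite V] {e : Sym2 V} : KValid G 1 e ↔ e ∈ G.edgeSet := by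
  refine ⟨fun ⟨_, _, he⟩ ↦ he.1, fun he ↦ ?_⟩
  have hacyclic : (G.induce (e : Set V)).IsAcyclic := by
    refine .of_card_le_two ?_
    induction e with
    | h x y => simpa using Finset.card_le_two (a := x) (b := y)
  refine ⟨nonIsolated G e, isStrongForest_one_nonIsolated hacyclic, ?_⟩
  rw [forestEdges_nonIsolated]
  exact ⟨he, fun _ hx ↦ hx⟩

theorem fStrong_one_le_card_of_isAcyclic [Finite V] {ι : Type*} [Fintype ι] {F : ι → Set V}
    (hF : ∀ i, (G.induce (F i)).IsAcyclic)
    (hcover : ∀ e ∈ G.edgeSet, ∃ i, e ∈ forestEdges G (F i)) :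
    fStrong G 1 ≤ Fintype.card ι := by
  have hstrong : IsStrongForestCover G 1 fun i ↦ nonIsolated G (F i) :=
    ⟨fun i ↦ isStrongForest_one_nonIsolated (hF i), fun e he ↦ by
      simpa only [forestEdges_nonIsolated] using hcover e (kValid_one_iff.1 he)⟩
  exact hstrong.fStrong_le_card

theorem IsAcyclicColoring.fStrong_one_le [Finite V] {m : ℕ} {c : V → Fin m}
    (hc : IsAcyclicColoring G c) : fStrong G 1 ≤ m.choose 2 := by
  have hacyclic (z : Sym2 (Fin m)) : (G.induce {v | c v ∈ z}).IsAcyclic := by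
    induction z with
    | h i j =>
      have hpair : {v | c v ∈ s(i, j)} = {v | c v = i ∨ c v = j} := by simp only [Sym2.mem_iff]
      exact hpair ▸ hc.2 i j
  have hcover : ∀ e ∈ G.edgeSet, ∃ z : {z : Sym2 (Fin m) // ¬ z.IsDiag},
      e ∈ forestEdges G {v | c v ∈ z.1} := by
    intro e he
    refine ⟨⟨e.map c, ?_⟩, he, fun x hx ↦ Sym2.mem_map.2 ⟨x, hx, rfl⟩⟩
    induction e with
    | h x y => exact hc.1 x y he
  calc fStrong G 1 ≤ Fintype.card {z : Sym2 (Fin m) // ¬ z.IsDiag} :=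
        fStrong_one_le_card_of_isAcyclic (fun z ↦ hacyclic z.1) hcover
    _ = m.choose 2 := by rw [Sym2.card_subtype_not_diag, Fintype.card_fin]

theorem isAcyclic_of_subsingleton_neighborSet {p : V → Prop}
    (hcover : ∀ x y, G.Adj x y → p x ∨ p y)
    (hleaf : ∀ x, p x → (G.neighborSet x).Subsingleton) : G.IsAcyclic := by
  have not_isCycle {u : V} (hu : p u) (w : G.Walk u u) : ¬ w.IsCycle := fun hw ↦
    hw.snd_ne_penultimate <|
      hleaf u hu (w.adj_snd hw.not_nil) (w.adj_penultimate hw.not_nil).symm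
  intro u w hw
  obtain hu | hsnd := hcover _ _ (w.adj_snd hw.not_nil)
  · exact not_isCycle hu w hw
  · exact not_isCycle hsnd _ (hw.rotate (w.getVert_mem_support 1))

theorem isAcyclicColoring_of_strictMono [PartialOrder V] {m : ℕ} {c : V → Fin m}
    (hc : StrictMono c) (hchain : ∀ v : V, IsChain (· ≤ ·) (Set.Iic v))
    (hcomp : ∀ u v, G.Adj u v → u ≤ v ∨ v ≤ u) : IsAcyclicColoring G c := by
  have hproper (u v : V) (huv : G.Adj u v) : c u ≠ c v := by
    obtain h | h := hcomp u v huv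
    · exact (hc (h.lt_of_ne huv.ne)).ne
    · exact (hc (h.lt_of_ne huv.ne')).ne'
  have le_of_adj {u v : V} (huv : G.Adj u v) (hlt : c u < c v) : u ≤ v :=
    (hcomp u v huv).resolve_right fun h ↦ (hc.monotone h).not_gt hlt
  have eq_of_le {x y z : V} (hy : y ≤ x) (hz : z ≤ x) (hyz : c y = c z) : y = z := by
    by_contra hne
    obtain h | h := hchain x hy hz hne
    · exact (hc (h.lt_of_ne hne)).ne hyz
    · exact (hc (h.lt_of_ne' hne)).ne' hyz
  refine ⟨hproper, fun i j ↦
    isAcyclic_of_subsingleton_neighborSet (p := fun x ↦ c x = max i j) ?_ ?_⟩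
  · rintro ⟨x, hx⟩ ⟨y, hy⟩ hxy
    have := hproper x y hxy
    grind
  · rintro ⟨x, hx⟩ hmax ⟨y, hy⟩ hxy ⟨z, hz⟩ hxz
    have hxy' := hproper x y hxy
    have hxz' := hproper x z hxz
    have hyx : c y < c x := by grind
    have hzx : c z < c x := by grind
    have hyz : c y = c z := by grind
    exact Subtype.ext <|
      eq_of_le (le_of_adj (G.adj_symm hxy) hyx) (le_of_adj (G.adj_symm hxz) hzx) hyz

theorem HasTreedepthAtMost.exists_isAcyclicColoring [Finite V] {d : ℕ}
    (h : HasTreedepthAtMost G d) : ∃ c : V → Fin d, IsAcyclicColoring G c := by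
  obtain ⟨le, hle, hchain, hcomp, hcard⟩ := h
  let _ : PartialOrder V :=
    { le := le
      le_refl := hle.refl
      le_trans := hle.trans
      le_antisymm := hle.antisymm }
  have hdepth (v : V) : (Set.Iio v).ncard < d :=
    (Set.ncard_strictMono Set.Iio_ssubset_Iic_self).trans_le (hcard v)
  exact ⟨fun v ↦ ⟨(Set.Iio v).ncard, hdepth v⟩,
    isAcyclicColoring_of_strictMono (fun _ _ h ↦ Set.ncard_strictMono (Set.Iio_ssubset_Iio h))
      hchain hcomp⟩

theorem hasTreedepthAtMost_card [Finite V] (G : SimpleGraph V) :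
    HasTreedepthAtMost G (Nat.card V) := by
  obtain ⟨_, _⟩ := exists_wellFoundedLT V
  exact ⟨(· ≤ ·), inferInstance, fun _ _ _ _ _ _ ↦ le_total _ _, fun u v _ ↦ le_total u v,
    fun _ ↦ Set.ncard_le_card _⟩

theorem exists_isAcyclicColoring_treedepth [Finite V] (G : SimpleGraph V) :
    ∃ c : V → Fin (treedepth G), IsAcyclicColoring G c :=
  HasTreedepthAtMost.exists_isAcyclicColoring <|
    Nat.sInf_mem (s := {d | HasTreedepthAtMost G d}) ⟨_, hasTreedepthAtMost_card G⟩

theorem chiAcyc_le_treedepth [Finite V] (G : SimpleGraph V) : chiAcyc G ≤ treedepth G :=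
  Nat.sInf_le (exists_isAcyclicColoring_treedepth G)

theorem exists_isAcyclicColoring_chiAcyc [Finite V] (G : SimpleGraph V) :
    ∃ c : V → Fin (chiAcyc G), IsAcyclicColoring G c :=
  Nat.sInf_mem (s := {m | ∃ c : V → Fin m, IsAcyclicColoring G c})
    ⟨_, exists_isAcyclicColoring_treedepth G⟩

theorem fStrong_one_le_choose_chiAcyc [Finite V] (G : SimpleGraph V) :
    fStrong G 1 ≤ (chiAcyc G).choose 2 := by
  obtain ⟨_, hc⟩ := exists_isAcyclicColoring_chiAcyc G
  exact hc.fStrong_one_le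

theorem fStrong_one_le_choose_treedepth [Finite V] (G : SimpleGraph V) :
    fStrong G 1 ≤ (treedepth G).choose 2 :=
  (fStrong_one_le_choose_chiAcyc G).trans (Nat.choose_le_choose 2 (chiAcyc_le_treedepth G))

theorem card_le_chiAcyc_of_isClique [Finite V] {s : Finset V} (hs : G.IsClique s) :
    s.card ≤ chiAcyc G := by
  obtain ⟨c, hc⟩ := exists_isAcyclicColoring_chiAcyc G
  simpa using hs.card_le_of_coloring (.mk c fun {u v} ↦ hc.1 u v)

theorem eq_of_mem_forestEdges_of_isClique {S s : Set V} (hS : (G.induce S).IsAcyclic)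
    (hs : G.IsClique s) {e e' : Sym2 V} (he : e ∈ forestEdges G S) (he' : e' ∈ forestEdges G S)
    (hes : ∀ x ∈ e, x ∈ s) (hes' : ∀ x ∈ e', x ∈ s) : e = e' := by
  have no_triangle {a b c : V} (ha : a ∈ S) (hb : b ∈ S) (hc : c ∈ S) (hab : G.Adj a b)
      (hac : G.Adj a c) (hbc : G.Adj b c) : False := by
    have htriangle : (G.induce S).IsNClique 3 {⟨a, ha⟩, ⟨b, hb⟩, ⟨c, hc⟩} :=
      SimpleGraph.is3Clique_triple_iff.2 ⟨hab, hac, hbc⟩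
    exact hS.cliqueFree le_rfl _ htriangle
  induction e with
  | h a b =>
  induction e' with
  | h x y =>
    obtain ⟨hab, heS⟩ := he
    obtain ⟨hxy, heS'⟩ := he'
    have mem_of_mem {z : V} (hz : z ∈ s(x, y)) : z ∈ s(a, b) := by
      by_contra hne
      obtain ⟨hza, hzb⟩ : z ≠ a ∧ z ≠ b := by simpa using hne
      exact no_triangle (heS a (by simp)) (heS b (by simp)) (heS' z hz) hab
        (hs (hes a (by simp)) (hes' z hz) hza.symm) (hs (hes b (by simp)) (hes' z hz) hzb.symm)
    exact (Sym2.mem_and_mem_iff hxy.ne).1 ⟨mem_of_mem (by simp), mem_of_mem (by simp)⟩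

theorem choose_card_le_fStrong_one_of_isClique [Finite V] {s : Finset V} (hs : G.IsClique s) :
    s.card.choose 2 ≤ fStrong G 1 := by
  obtain ⟨F, hF, hcover⟩ := exists_isStrongForestCover_fStrong G 1
  let toEdge (z : {z : Sym2 s // ¬ z.IsDiag}) : Sym2 V := z.1.map Subtype.val
  have toEdge_injective : Function.Injective toEdge :=
    (Sym2.map.injective Subtype.val_injective).comp Subtype.val_injective
  have mem_clique (z) : ∀ x ∈ toEdge z, x ∈ (s : Set V) := by
    simp only [toEdge, Sym2.mem_map]
    rintro _ ⟨x, -, rfl⟩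
    exact x.2
  have toEdge_mem (z) : toEdge z ∈ G.edgeSet := by
    obtain ⟨z, hz⟩ := z
    induction z with
    | h x y => exact hs x.2 y.2 (Subtype.coe_ne_coe.2 hz)
  choose g hg using fun z ↦ hcover _ (kValid_one_iff.2 (toEdge_mem z))
  have hinj : Function.Injective g := fun z z' h ↦ toEdge_injective <|
    eq_of_mem_forestEdges_of_isClique (hF (g z)).1 hs (hg z) (h ▸ hg z') (mem_clique z)
      (mem_clique z')
  calc s.card.choose 2 = Fintype.card {z : Sym2 s // ¬ z.IsDiag} := by
        rw [Sym2.card_subtype_not_diag, Fintype.card_coe]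
    _ ≤ fStrong G 1 := by simpa using Fintype.card_le_of_injective g hinj

theorem treedepth_top [Finite V] : treedepth (⊤ : SimpleGraph V) = Nat.card V := by
  have := Fintype.ofFinite V
  refine le_antisymm (Nat.sInf_le (hasTreedepthAtMost_card _)) ?_
  calc Nat.card V = (Finset.univ : Finset V).card := Nat.card_eq_fintype_card
    _ ≤ chiAcyc ⊤ := card_le_chiAcyc_of_isClique (.top _)
    _ ≤ treedepth ⊤ := chiAcyc_le_treedepth _

theorem fStrong_one_top [Finite V] :
    fStrong (⊤ : SimpleGraph V) 1 = (Nat.card V).choose 2 := by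
  have := Fintype.ofFinite V
  refine le_antisymm (treedepth_top (V := V) ▸ fStrong_one_le_choose_treedepth _) ?_
  rw [Nat.card_eq_fintype_card]
  exact choose_card_le_fStrong_one_of_isClique (s := Finset.univ) (.top _)

/-- Every finite simple graph of tree-depth at most `d` satisfies
`f₁(G) ≤ (d choose 2)`; moreover this bound is attained by the complete graph `K_d`,
which has tree-depth `d` and `f₁(K_d) = (d choose 2)`. -/
theorem fStrong_one_le_of_treedepth :
    (∀ (V : Type) [Fintype V] (G : SimpleGraph V) (d : ℕ), treedepth G ≤ d →
      fStrong G 1 ≤ d.choose 2) ∧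
    (∀ d : ℕ, treedepth (SimpleGraph.completeGraph (Fin d)) = d ∧
      fStrong (SimpleGraph.completeGraph (Fin d)) 1 = d.choose 2) := by
  refine ⟨fun V _ G d hd ↦ ?_, fun d ↦ ⟨?_, ?_⟩⟩
  · exact (fStrong_one_le_choose_treedepth G).trans (Nat.choose_le_choose 2 hd)
  · simpa using treedepth_top (V := Fin d)
  · simpa using fStrong_one_top (V := Fin d)

end InducedArboricity
end
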